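/- Let H₀, H₁ be complex Hilbert spaces, K := H₀ ⊕ H₁ with Δ the orthogonal projection of K onto H₁, and L ∈ B(H₀; H₁). For h > 0, let V_{√hL} := [[(I + hL*L)^{-1/2}, −√h·L*(I + hLL*)^{-1/2}], [√h·L(I + hL*L)^{-1/2}, (I + hLL*)^{-1/2}]], where the inverse square roots are given by the continuous functional calculus. Then ‖s_h(V_{√hL} − I) − F_{0,L,I}‖ → 0 as h → 0, where s_h(T) := S_h T S_h with S_h := h^{-1/2}(I − Δ) + Δ, and F_{0,L,I} = [[−½L*L, −L*], [L, 0]]. Equivalently, in block form: h^{-1}((I + hL*L)^{-1/2} − I) → −½L*L, L(I + hL*L)^{-1/2} → L, L*(I + hLL*)^{-1/2} → L*, and (I + hLL*)^{-1/2} → I, all in operator norm as h → 0. -/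

import Mathlib

open ContinuousLinearMap

noncomputable section

variable (H₀ H₁ : Type*) [NormedAddCommGroup H₀] [InnerProductSpace ℂ H₀] [CompleteSpace H₀]
  [NormedAddCommGroup H₁] [InnerProductSpace ℂ H₁] [CompleteSpace H₁]

/-- The inclusion `H₀ → H₀ ⊕ H₁` (Hilbert-space direct sum). -/
def inl0 : H₀ →L[ℂ] WithLp 2 (H₀ × H₁) :=
  ((WithLp.prodContinuousLinearEquiv 2 ℂ H₀ H₁).symm : H₀ × H₁ →L[ℂ] WithLp 2 (H₀ × H₁)) ∘L
    ContinuousLinearMap.inl ℂ H₀ H₁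

/-- The inclusion `H₁ → H₀ ⊕ H₁`. -/
def inr1 : H₁ →L[ℂ] WithLp 2 (H₀ × H₁) :=
  ((WithLp.prodContinuousLinearEquiv 2 ℂ H₀ H₁).symm : H₀ × H₁ →L[ℂ] WithLp 2 (H₀ × H₁)) ∘L
    ContinuousLinearMap.inr ℂ H₀ H₁

/-- The projection `H₀ ⊕ H₁ → H₀`. -/
def fst0 : WithLp 2 (H₀ × H₁) →L[ℂ] H₀ :=
  ContinuousLinearMap.fst ℂ H₀ H₁ ∘L
    ((WithLp.prodContinuousLinearEquiv 2 ℂ H₀ H₁) : WithLp 2 (H₀ × H₁) →L[ℂ] H₀ × H₁)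

/-- The projection `H₀ ⊕ H₁ → H₁`. -/
def snd1 : WithLp 2 (H₀ × H₁) →L[ℂ] H₁ :=
  ContinuousLinearMap.snd ℂ H₀ H₁ ∘L
    ((WithLp.prodContinuousLinearEquiv 2 ℂ H₀ H₁) : WithLp 2 (H₀ × H₁) →L[ℂ] H₀ × H₁)

variable {H₀ H₁}

/-- The block operator `[[A, C], [B, D]]` on `H₀ ⊕ H₁`. -/
def blk (A : H₀ →L[ℂ] H₀) (C : H₁ →L[ℂ] H₀) (B : H₀ →L[ℂ] H₁) (D : H₁ →L[ℂ] H₁) :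
    WithLp 2 (H₀ × H₁) →L[ℂ] WithLp 2 (H₀ × H₁) :=
  inl0 H₀ H₁ ∘L A ∘L fst0 H₀ H₁ + inl0 H₀ H₁ ∘L C ∘L snd1 H₀ H₁ +
    inr1 H₀ H₁ ∘L B ∘L fst0 H₀ H₁ + inr1 H₀ H₁ ∘L D ∘L snd1 H₀ H₁

/-- `Δ`, the orthogonal projection of `H₀ ⊕ H₁` onto `H₁`. -/
def projR : WithLp 2 (H₀ × H₁) →L[ℂ] WithLp 2 (H₀ × H₁) :=
  inr1 H₀ H₁ ∘L snd1 H₀ H₁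

/-- The series product `F₁ ◁ F₂ = F₁ + F₂ + F₁ Δ F₂` on `B(H₀ ⊕ H₁)`. -/
def seriesProd (F₁ F₂ : WithLp 2 (H₀ × H₁) →L[ℂ] WithLp 2 (H₀ × H₁)) :
    WithLp 2 (H₀ × H₁) →L[ℂ] WithLp 2 (H₀ × H₁) :=
  F₁ + F₂ + F₁ * projR * F₂

/-- `F_{Z,L,W} = [[Z - ½L*L, -L*W], [L, W - 1]]`. -/
def FZLW (Z : H₀ →L[ℂ] H₀) (L : H₀ →L[ℂ] H₁) (W : H₁ →L[ℂ] H₁) :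
    WithLp 2 (H₀ × H₁) →L[ℂ] WithLp 2 (H₀ × H₁) :=
  blk (Z - (2 : ℂ)⁻¹ • (adjoint L ∘L L)) (-(adjoint L ∘L W)) L (W - 1)

open Filter Topology

/-- The operator `S_h = h^{-1/2}(I - Δ) + Δ` on `H₀ ⊕ H₁`. -/
def scaleOp (h : ℝ) : WithLp 2 (H₀ × H₁) →L[ℂ] WithLp 2 (H₀ × H₁) :=
  ((Real.sqrt h : ℂ))⁻¹ • (1 - projR) + projR

/-- The scaling map `s_h(T) = S_h T S_h`. -/
def scal (h : ℝ) (T : WithLp 2 (H₀ × H₁) →L[ℂ] WithLp 2 (H₀ × H₁)) :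
    WithLp 2 (H₀ × H₁) →L[ℂ] WithLp 2 (H₀ × H₁) :=
  scaleOp h * T * scaleOp h

/-- The inverse square root `(1 + S)^{-1/2}` of `1 + S` for a positive operator `S`,
given by applying `x ↦ (1 + x)^{-1/2}` to `S` via the continuous functional calculus. -/
def invSqrtOnePlus {K : Type*} [NormedAddCommGroup K] [InnerProductSpace ℂ K] [CompleteSpace K]
    (S : K →L[ℂ] K) : K →L[ℂ] K :=
  cfc (fun x : ℝ => (1 + x) ^ (-(1 / 2 : ℝ))) S

/-- The block operator `V_{√h L}`. -/
def VLh (h : ℝ) (L : H₀ →L[ℂ] H₁) : WithLp 2 (H₀ × H₁) →L[ℂ] WithLp 2 (H₀ × H₁) :=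
  blk (invSqrtOnePlus ((h : ℂ) • (adjoint L ∘L L)))
    (-((Real.sqrt h : ℂ) • (adjoint L ∘L invSqrtOnePlus ((h : ℂ) • (L ∘L adjoint L)))))
    ((Real.sqrt h : ℂ) • (L ∘L invSqrtOnePlus ((h : ℂ) • (adjoint L ∘L L))))
    (invSqrtOnePlus ((h : ℂ) • (L ∘L adjoint L)))

lemma aux_scalar (x : ℝ) (hx : 0 ≤ x) :
    |(1 + x) ^ (-(1 / 2 : ℝ)) - 1| ≤ x ∧ |(1 + x) ^ (-(1 / 2 : ℝ)) - 1 + 2⁻¹ * x| ≤ x ^ 2 := by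
  have h1 : (1 + x) ^ (-(1 / 2 : ℝ)) = (Real.sqrt (1 + x))⁻¹ := by
    rw [Real.rpow_neg (by linarith), Real.sqrt_eq_rpow]
  rw [h1]
  obtain ⟨y, hy⟩ : ∃ y, y = Real.sqrt (1 + x) := ⟨_, rfl⟩
  rw [← hy]
  have hy1 : 1 ≤ y := by rw [hy]; exact Real.one_le_sqrt.mpr (by linarith)
  have hy2 : x = y ^ 2 - 1 := by rw [hy, Real.sq_sqrt (by linarith)]; ring
  have hinv1 : y⁻¹ ≤ 1 := inv_le_one_of_one_le₀ hy1
  have hinv0 : 0 < y⁻¹ := by positivity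
  have hmul : y * y⁻¹ = 1 := mul_inv_cancel₀ (by linarith)
  constructor
  · rw [abs_le]
    constructor <;> nlinarith
  · have e : y⁻¹ - 1 + 2⁻¹ * x = (y - 1) ^ 2 * (1 + 2 * y⁻¹) / 2 := by
      rw [hy2]; field_simp; ring
    rw [e, abs_of_nonneg (by positivity)]
    have e2 : x ^ 2 = (y - 1) ^ 2 * (y + 1) ^ 2 := by rw [hy2]; ring
    rw [e2, mul_div_assoc]
    gcongr
    nlinarith

lemma aux_op {K : Type*} [NormedAddCommGroup K] [InnerProductSpace ℂ K] [CompleteSpace K]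
    (S : K →L[ℂ] K) (hS : 0 ≤ S) :
    ‖invSqrtOnePlus S - 1‖ ≤ ‖S‖ ∧
    ‖invSqrtOnePlus S - 1 + (2 : ℂ)⁻¹ • S‖ ≤ ‖S‖ ^ 2 := by
  have hsa : IsSelfAdjoint S := IsSelfAdjoint.of_nonneg hS
  have hnn : ∀ x ∈ spectrum ℝ S, 0 ≤ x := fun x hx => spectrum_nonneg_of_nonneg hS hx
  have hle : ∀ x ∈ spectrum ℝ S, x ≤ ‖S‖ := fun x hx => by
    have := norm_apply_le_norm_cfc (id : ℝ → ℝ) S hx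
    rw [cfc_id ℝ S] at this
    exact (le_abs_self x).trans this
  have hc : ContinuousOn (fun x : ℝ => (1 + x) ^ (-(1 / 2 : ℝ))) (spectrum ℝ S) := by
    apply ContinuousOn.rpow_const (by fun_prop)
    intro x hx
    left
    have := hnn x hx
    linarith
  have e1 : invSqrtOnePlus S - 1 = cfc (fun x : ℝ => (1 + x) ^ (-(1 / 2 : ℝ)) - 1) S := by
    rw [cfc_sub (fun x : ℝ => (1 + x) ^ (-(1 / 2 : ℝ))) (fun _ => 1) S hc (by fun_prop),
      cfc_const_one ℝ S]
    rfl
  have e2 : invSqrtOnePlus S - 1 + (2 : ℂ)⁻¹ • S =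
      cfc (fun x : ℝ => (1 + x) ^ (-(1 / 2 : ℝ)) - 1 + 2⁻¹ * x) S := by
    rw [cfc_add (a := S) (fun x : ℝ => (1 + x) ^ (-(1 / 2 : ℝ)) - 1) (fun x => 2⁻¹ * x)
      (hc.sub (by fun_prop)) (by fun_prop), ← e1, cfc_const_mul_id (2⁻¹ : ℝ) S]
    congr 1
    ext v
    simp [← Complex.coe_smul]
  constructor
  · rw [e1]
    refine norm_cfc_le (norm_nonneg _) fun x hx => ?_
    exact (aux_scalar x (hnn x hx)).1.trans (hle x hx)
  · rw [e2]
    refine norm_cfc_le (by positivity) fun x hx => ?_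
    refine (aux_scalar x (hnn x hx)).2.trans ?_
    have := hnn x hx
    have := hle x hx
    gcongr

lemma aux_nonneg {K : Type*} [NormedAddCommGroup K] [InnerProductSpace ℂ K] [CompleteSpace K]
    (S : K →L[ℂ] K) (hS : 0 ≤ S) (h : ℝ) (hh : 0 < h) : 0 ≤ (h : ℂ) • S := by
  rw [nonneg_iff_isPositive] at hS ⊢
  exact hS.smul_of_nonneg (by exact_mod_cast hh.le)

lemma aux_tendsto_one {K : Type*} [NormedAddCommGroup K] [InnerProductSpace ℂ K] [CompleteSpace K]
    (S : K →L[ℂ] K) (hS : 0 ≤ S) :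
    Tendsto (fun h : ℝ => invSqrtOnePlus ((h : ℂ) • S)) (𝓝[>] 0) (𝓝 1) := by
  rw [tendsto_iff_norm_sub_tendsto_zero]
  have ht : Tendsto (fun h : ℝ => |h| * ‖S‖) (𝓝[>] 0) (𝓝 0) := by
    have : Tendsto (fun h : ℝ => |h| * ‖S‖) (𝓝 0) (𝓝 (|0| * ‖S‖)) :=
      Continuous.tendsto (by fun_prop) 0
    simpa using this.mono_left nhdsWithin_le_nhds
  refine squeeze_zero' (Eventually.of_forall fun _ => norm_nonneg _) ?_ ht
  filter_upwards [self_mem_nhdsWithin] with h hh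
  refine (aux_op _ (aux_nonneg S hS h hh)).1.trans ?_
  simp [norm_smul]

lemma aux_tendsto_deriv {K : Type*} [NormedAddCommGroup K] [InnerProductSpace ℂ K]
    [CompleteSpace K] (S : K →L[ℂ] K) (hS : 0 ≤ S) :
    Tendsto (fun h : ℝ => (h : ℂ)⁻¹ • (invSqrtOnePlus ((h : ℂ) • S) - 1)) (𝓝[>] 0)
      (𝓝 (-((2 : ℂ)⁻¹ • S))) := by
  rw [tendsto_iff_norm_sub_tendsto_zero]
  have ht : Tendsto (fun h : ℝ => |h| * ‖S‖ ^ 2) (𝓝[>] 0) (𝓝 0) := by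
    have : Tendsto (fun h : ℝ => |h| * ‖S‖ ^ 2) (𝓝 0) (𝓝 (|0| * ‖S‖ ^ 2)) :=
      Continuous.tendsto (by fun_prop) 0
    simpa using this.mono_left nhdsWithin_le_nhds
  refine squeeze_zero' (Eventually.of_forall fun _ => norm_nonneg _) ?_ ht
  filter_upwards [self_mem_nhdsWithin] with h hh
  have hh : 0 < h := hh
  have hne : (h : ℂ) ≠ 0 := by exact_mod_cast hh.ne'
  have e : (h : ℂ)⁻¹ • (invSqrtOnePlus ((h : ℂ) • S) - 1) - -((2 : ℂ)⁻¹ • S) =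
      (h : ℂ)⁻¹ • (invSqrtOnePlus ((h : ℂ) • S) - 1 + (2 : ℂ)⁻¹ • ((h : ℂ) • S)) := by
    rw [smul_add, smul_comm (2 : ℂ)⁻¹ (h : ℂ) S, inv_smul_smul₀ hne, sub_neg_eq_add]
  rw [e, norm_smul]
  have := (aux_op _ (aux_nonneg S hS h hh)).2
  rw [norm_smul, Complex.norm_real, Real.norm_eq_abs, abs_of_pos hh] at this
  rw [norm_inv, Complex.norm_real, Real.norm_eq_abs, abs_of_pos hh]
  calc h⁻¹ * _ ≤ h⁻¹ * (h * ‖S‖) ^ 2 := by gcongr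
    _ = h * ‖S‖ ^ 2 := by field_simp

lemma aux_scal (h : ℝ) (hh : 0 < h) (L : H₀ →L[ℂ] H₁) :
    scal h (VLh h L - 1) =
      blk ((h : ℂ)⁻¹ • (invSqrtOnePlus ((h : ℂ) • (adjoint L ∘L L)) - 1))
        (-(adjoint L ∘L invSqrtOnePlus ((h : ℂ) • (L ∘L adjoint L))))
        (L ∘L invSqrtOnePlus ((h : ℂ) • (adjoint L ∘L L)))
        (invSqrtOnePlus ((h : ℂ) • (L ∘L adjoint L)) - 1) := by
  have hs : (Real.sqrt h : ℂ) ≠ 0 := by exact_mod_cast (Real.sqrt_pos.mpr hh).ne'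
  have hsq : (h : ℂ) = (Real.sqrt h : ℂ) * (Real.sqrt h : ℂ) := by
    exact_mod_cast (Real.mul_self_sqrt hh.le).symm
  have hinv : (h : ℂ)⁻¹ = (Real.sqrt h : ℂ)⁻¹ * (Real.sqrt h : ℂ)⁻¹ := by
    rw [hsq, mul_inv]
  rw [hinv]
  unfold scal scaleOp VLh
  generalize invSqrtOnePlus ((h : ℂ) • (adjoint L ∘L L)) = A
  generalize invSqrtOnePlus ((h : ℂ) • (L ∘L adjoint L)) = D
  generalize (Real.sqrt h : ℂ) = s at hs
  ext v
  apply (WithLp.prodContinuousLinearEquiv 2 ℂ H₀ H₁).injective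
  apply Prod.ext
  · simp [blk, projR, inl0, inr1, fst0, snd1, smul_sub, smul_smul, hs]
    try abel
  · simp [blk, projR, inl0, inr1, fst0, snd1, smul_sub, smul_smul, hs]
    try abel

lemma aux_comp {E F G : Type*} [NormedAddCommGroup E] [NormedSpace ℂ E]
    [NormedAddCommGroup F] [NormedSpace ℂ F] [NormedAddCommGroup G] [NormedSpace ℂ G]
    {l : Filter ℝ} {f : ℝ → F →L[ℂ] G} {g : ℝ → E →L[ℂ] F} {f₀ : F →L[ℂ] G} {g₀ : E →L[ℂ] F}
    (hf : Tendsto f l (𝓝 f₀)) (hg : Tendsto g l (𝓝 g₀)) :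
    Tendsto (fun h => f h ∘L g h) l (𝓝 (f₀ ∘L g₀)) :=
  (isBoundedBilinearMap_comp (𝕜 := ℂ) (E := E) (F := F) (G := G)).continuous.tendsto (f₀, g₀)
    |>.comp (hf.prodMk_nhds hg)

theorem scaled_VLh_tendsto_F0LI (L : H₀ →L[ℂ] H₁) :
    Tendsto (fun h : ℝ => ‖scal h (VLh h L - 1) - FZLW 0 L 1‖) (𝓝[>] 0) (𝓝 0) ∧
    Tendsto (fun h : ℝ =>
        ‖(h : ℂ)⁻¹ • (invSqrtOnePlus ((h : ℂ) • (adjoint L ∘L L)) - 1) -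
          (-((2 : ℂ)⁻¹ • (adjoint L ∘L L)))‖) (𝓝[>] 0) (𝓝 0) ∧
    Tendsto (fun h : ℝ =>
        ‖L ∘L invSqrtOnePlus ((h : ℂ) • (adjoint L ∘L L)) - L‖) (𝓝[>] 0) (𝓝 0) ∧
    Tendsto (fun h : ℝ =>
        ‖adjoint L ∘L invSqrtOnePlus ((h : ℂ) • (L ∘L adjoint L)) - adjoint L‖)
      (𝓝[>] 0) (𝓝 0) ∧
    Tendsto (fun h : ℝ =>
        ‖invSqrtOnePlus ((h : ℂ) • (L ∘L adjoint L)) - 1‖) (𝓝[>] 0) (𝓝 0) := by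
  have h0 : (0 : H₀ →L[ℂ] H₀) ≤ adjoint L ∘L L :=
    (nonneg_iff_isPositive _).mpr (isPositive_adjoint_comp_self L)
  have h1 : (0 : H₁ →L[ℂ] H₁) ≤ L ∘L adjoint L :=
    (nonneg_iff_isPositive _).mpr (isPositive_self_comp_adjoint L)
  have tA := aux_tendsto_deriv _ h0
  have tD := aux_tendsto_one _ h1
  have tB : Tendsto (fun h : ℝ => L ∘L invSqrtOnePlus ((h : ℂ) • (adjoint L ∘L L)))
      (𝓝[>] 0) (𝓝 L) := by
    have := aux_comp (tendsto_const_nhds (x := L)) (aux_tendsto_one _ h0)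
    simpa [ContinuousLinearMap.one_def] using this
  have tC : Tendsto (fun h : ℝ => adjoint L ∘L invSqrtOnePlus ((h : ℂ) • (L ∘L adjoint L)))
      (𝓝[>] 0) (𝓝 (adjoint L)) := by
    have := aux_comp (tendsto_const_nhds (x := adjoint L)) tD
    simpa [ContinuousLinearMap.one_def] using this
  refine ⟨?_, tendsto_iff_norm_sub_tendsto_zero.mp tA, tendsto_iff_norm_sub_tendsto_zero.mp tB,
    tendsto_iff_norm_sub_tendsto_zero.mp tC, tendsto_iff_norm_sub_tendsto_zero.mp tD⟩
  rw [← tendsto_iff_norm_sub_tendsto_zero]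
  have key : Tendsto (fun h : ℝ =>
      blk ((h : ℂ)⁻¹ • (invSqrtOnePlus ((h : ℂ) • (adjoint L ∘L L)) - 1))
        (-(adjoint L ∘L invSqrtOnePlus ((h : ℂ) • (L ∘L adjoint L))))
        (L ∘L invSqrtOnePlus ((h : ℂ) • (adjoint L ∘L L)))
        (invSqrtOnePlus ((h : ℂ) • (L ∘L adjoint L)) - 1)) (𝓝[>] 0)
      (𝓝 (blk (-((2 : ℂ)⁻¹ • (adjoint L ∘L L))) (-(adjoint L)) L (1 - 1))) := by
    unfold blk
    refine ((Tendsto.add ?_ ?_).add ?_).add ?_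
    · exact aux_comp tendsto_const_nhds (aux_comp tA tendsto_const_nhds)
    · exact aux_comp tendsto_const_nhds (aux_comp tC.neg tendsto_const_nhds)
    · exact aux_comp tendsto_const_nhds (aux_comp tB tendsto_const_nhds)
    · exact aux_comp tendsto_const_nhds (aux_comp (tD.sub_const 1) tendsto_const_nhds)
  have e : FZLW 0 L 1 = blk (-((2 : ℂ)⁻¹ • (adjoint L ∘L L))) (-(adjoint L)) L (1 - 1) := by
    unfold FZLW
    rw [zero_sub, ContinuousLinearMap.one_def, ContinuousLinearMap.comp_id]
  rw [e]
  refine key.congr' ?_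
  filter_upwards [self_mem_nhdsWithin] with h hh
  exact (aux_scal h hh L).symm
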